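/- Let j, k, l be the permutations of {0,…,14} given in cycle notation by j = (0 14)(4 5)(9 10)(1 12)(7 11)(2 6), k = (4 6)(1 13)(8 9)(2 7), l = (14 1)(3 4)(12 2)(8 11), and j' = (0 11)(1 5)(3 4)(6 10)(8 9)(13 14), k' = (0 10)(1 2)(6 9)(12 14), l' = (0 5)(2 4)(6 7)(11 14). Let G be the subgroup of Sym(15) × Sym(15) generated by (j,j'), (k,k'), (l,l'), and let A = {(σ,τ) ∈ G : σ(0) = 0}, B = {(σ,τ) ∈ G : τ(0) = 0}. Then for every (σ,τ) ∈ G the number of fixed points of σ equals the number of fixed points of τ; A and B are Gassmann equivalent subgroups of G of index 15; and A and B are not conjugate in G. -/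

import Mathlib

open Equiv

/-- j = (0 14)(4 5)(9 10)(1 12)(7 11)(2 6) -/
def j : Perm (Fin 15) := swap 0 14 * swap 4 5 * swap 9 10 * swap 1 12 * swap 7 11 * swap 2 6
/-- k = (4 6)(1 13)(8 9)(2 7) -/
def k : Perm (Fin 15) := swap 4 6 * swap 1 13 * swap 8 9 * swap 2 7
/-- l = (14 1)(3 4)(12 2)(8 11) -/
def l : Perm (Fin 15) := swap 14 1 * swap 3 4 * swap 12 2 * swap 8 11
/-- j' = (0 11)(1 5)(3 4)(6 10)(8 9)(13 14) -/
def j' : Perm (Fin 15) := swap 0 11 * swap 1 5 * swap 3 4 * swap 6 10 * swap 8 9 * swap 13 14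
/-- k' = (0 10)(1 2)(6 9)(12 14) -/
def k' : Perm (Fin 15) := swap 0 10 * swap 1 2 * swap 6 9 * swap 12 14
/-- l' = (0 5)(2 4)(6 7)(11 14) -/
def l' : Perm (Fin 15) := swap 0 5 * swap 2 4 * swap 6 7 * swap 11 14

/-- The subgroup of Sym(15) × Sym(15) generated by (j,j'), (k,k'), (l,l'). -/
def G₀ : Subgroup (Perm (Fin 15) × Perm (Fin 15)) :=
  Subgroup.closure {(j, j'), (k, k'), (l, l')}

/-- A = {(σ,τ) ∈ G₀ : σ 0 = 0}, the point stabilizer in the first action. -/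
def A : Subgroup G₀ where
  carrier := {g | (g : Perm (Fin 15) × Perm (Fin 15)).1 0 = 0}
  one_mem' := rfl
  mul_mem' := by
    intro x y hx hy
    simp only [Set.mem_setOf_eq] at *
    simp [Subgroup.coe_mul, Perm.mul_apply, hx, hy]
  inv_mem' := by
    intro x hx
    simp only [Set.mem_setOf_eq] at *
    conv_lhs => rw [← hx]
    simp

/-- B = {(σ,τ) ∈ G₀ : τ 0 = 0}, the point stabilizer in the second action. -/
def B : Subgroup G₀ where
  carrier := {g | (g : Perm (Fin 15) × Perm (Fin 15)).2 0 = 0}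
  one_mem' := rfl
  mul_mem' := by
    intro x y hx hy
    simp only [Set.mem_setOf_eq] at *
    simp [Subgroup.coe_mul, Perm.mul_apply, hx, hy]
  inv_mem' := by
    intro x hx
    simp only [Set.mem_setOf_eq] at *
    conv_lhs => rw [← hx]
    simp

/-!
`G₀` acts on the points and planes of PG(3,2), which form a symmetric block design. An automorphism
of a symmetric design fixes as many blocks as points: count the pairs `(x, y)` such that the block
`y` contains both `x` and its image. For transitive actions, equal numbers of fixed points make
point stabilizers Gassmann equivalent, by counting the pairs `(x, h)` with `h` in a given conjugacy
class and `h • x = x`. If the stabilizer of a point were conjugate to the stabilizer of a plane, it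
would fix a plane, which it does not.

In the given labelling `l * k * j` is the Singer cycle `x ↦ x + 1` on the points, and
`l' * k' * j'` is `y ↦ y - 1` on the planes. So both actions are transitive, and incidence of `x`
and `y` depends only on `x + y`: it means that `x + y` lies in a difference set modulo 15.
-/

namespace Gassmann

section GassmannEquivalence

open MulAction

variable {G X Y : Type*} [Group G] [MulAction G X] [MulAction G Y]

/-- Gassmann equivalence of subgroups: both meet every conjugacy class in equally many elements. -/
def IsGassmannEquivalent (H K : Subgroup G) : Prop :=
  ∀ g, Nat.card (H ∩ conjugatesOf g : Set G) = Nat.card (K ∩ conjugatesOf g : Set G)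

lemma nonempty_equiv_stabilizer_inter_conjugatesOf_smul (g u : G) (x : X) :
    Nonempty ((stabilizer G x ∩ conjugatesOf g : Set G) ≃
      (stabilizer G (u • x) ∩ conjugatesOf g : Set G)) := by
  refine ⟨(MulAut.conj u).toEquiv.subtypeEquiv fun h => and_congr ?_ ?_⟩
  · simp [mul_smul]
  · have hconj : IsConj h (u * h * u⁻¹) := isConj_iff.2 ⟨u, rfl⟩
    exact ⟨fun hg => hg.trans hconj, fun hg => hg.trans hconj.symm⟩

variable (X) in
lemma nonempty_equiv_fixedBy_of_isConj {g h : G} (hgh : IsConj g h) :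
    Nonempty (fixedBy X g ≃ fixedBy X h) := by
  obtain ⟨u, rfl⟩ := isConj_iff.1 hgh
  exact ⟨(MulAction.toPerm u).subtypeEquiv fun x => by simp [mul_smul]⟩

lemma card_mul_card_stabilizer_inter_conjugatesOf [IsPretransitive G X] (g : G) (x : X) :
    Nat.card X * Nat.card (stabilizer G x ∩ conjugatesOf g : Set G) =
      Nat.card (conjugatesOf g) * Nat.card (fixedBy X g) := by
  have byPoint (y : X) : Nonempty ((stabilizer G x ∩ conjugatesOf g : Set G) ≃
      (stabilizer G y ∩ conjugatesOf g : Set G)) := by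
    obtain ⟨u, rfl⟩ := exists_smul_eq G x y
    exact nonempty_equiv_stabilizer_inter_conjugatesOf_smul g u x
  have byElement (h : conjugatesOf g) : Nonempty (fixedBy X (h : G) ≃ fixedBy X g) :=
    nonempty_equiv_fixedBy_of_isConj X (IsConj.symm h.2)
  have swapPairs : (Σ y : X, (stabilizer G y ∩ conjugatesOf g : Set G)) ≃
      Σ h : conjugatesOf g, fixedBy X (h : G) :=
    ⟨fun p => ⟨⟨p.2, p.2.2.2⟩, p.1, p.2.2.1⟩, fun p => ⟨p.2, p.1, p.2.2, p.1.2⟩,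
      fun _ => rfl, fun _ => rfl⟩
  rw [← Nat.card_prod, ← Nat.card_prod]
  exact Nat.card_congr <| calc
    X × (stabilizer G x ∩ conjugatesOf g : Set G)
      ≃ Σ y : X, (stabilizer G y ∩ conjugatesOf g : Set G) :=
        (Equiv.sigmaEquivProd ..).symm.trans (Equiv.sigmaCongrRight fun y => (byPoint y).some)
    _ ≃ Σ h : conjugatesOf g, fixedBy X (h : G) := swapPairs
    _ ≃ conjugatesOf g × fixedBy X g :=
        (Equiv.sigmaCongrRight fun h => (byElement h).some).trans (Equiv.sigmaEquivProd ..)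

theorem isGassmannEquivalent_stabilizer [Finite X] [IsPretransitive G X] [IsPretransitive G Y]
    (hfix : ∀ g : G, Nat.card (fixedBy X g) = Nat.card (fixedBy Y g)) (x : X) (y : Y) :
    IsGassmannEquivalent (stabilizer G x) (stabilizer G y) := by
  intro g
  have hcard : Nat.card X = Nat.card Y := by
    simpa [fixedBy_one_eq_univ, Nat.card_univ] using hfix 1
  have : Nonempty X := ⟨x⟩
  refine Nat.eq_of_mul_eq_mul_left (Nat.card_pos (α := X)) ?_
  calc Nat.card X * Nat.card (stabilizer G x ∩ conjugatesOf g : Set G)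
      = Nat.card (conjugatesOf g) * Nat.card (fixedBy X g) :=
        card_mul_card_stabilizer_inter_conjugatesOf g x
    _ = Nat.card (conjugatesOf g) * Nat.card (fixedBy Y g) := by rw [hfix]
    _ = Nat.card X * Nat.card (stabilizer G y ∩ conjugatesOf g : Set G) := by
        rw [hcard, card_mul_card_stabilizer_inter_conjugatesOf]

lemma exists_eq_stabilizer_of_map_conj_eq {u : G} {H : Subgroup G} {y : Y}
    (h : H.map (MulAut.conj u).toMonoidHom = stabilizer G y) :
    ∃ y' : Y, H = stabilizer G y' := by
  have hinj : Function.Injective (MulAut.conj u).toMonoidHom := (MulAut.conj u).injective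
  refine ⟨u⁻¹ • y, Subgroup.map_injective hinj ?_⟩
  rw [h, ← stabilizer_smul_eq_stabilizer_map_conj, smul_inv_smul]

end GassmannEquivalence

section SymmetricDesign

open Finset

variable {X Y : Type*} [Fintype X] [Fintype Y] [DecidableEq X] [DecidableEq Y]

/-- A symmetric block design given by its incidence relation: there are as many blocks as points,
every point lies on `r` blocks and two distinct points on `c` common blocks, and dually. -/
structure IsSymmetricDesign (I : X → Y → Prop) [∀ x y, Decidable (I x y)] (r c : ℕ) : Prop where
  card_eq : Fintype.card X = Fintype.card Y
  card_blocks : ∀ x x', #{y | I x y ∧ I x' y} = if x = x' then r else c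
  card_points : ∀ y y', #{x | I x y ∧ I x y'} = if y = y' then r else c

namespace IsSymmetricDesign

variable {I : X → Y → Prop} [∀ x y, Decidable (I x y)] {r c : ℕ}

lemma dual (hI : IsSymmetricDesign I r c) : IsSymmetricDesign (fun y x => I x y) r c :=
  ⟨hI.card_eq.symm, hI.card_points, hI.card_blocks⟩

lemma sum_card_blocks (hI : IsSymmetricDesign I r c) (σ : X → X) :
    ∑ x, (#{y | I (σ x) y ∧ I x y} : ℤ) = c * Fintype.card X + (r - c) * #{x | σ x = x} := by
  have hx (x : X) : (#{y | I (σ x) y ∧ I x y} : ℤ) = c + if σ x = x then (r - c : ℤ) else 0 := by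
    rw [hI.card_blocks]
    split_ifs <;> simp
  simp only [hx, sum_add_distrib, ← sum_filter, sum_const, card_univ, nsmul_eq_mul]
  ring

theorem card_fixed_eq (hI : IsSymmetricDesign I r c) (hrc : r ≠ c) {σ : Perm X} {τ : Perm Y}
    (hστ : ∀ x y, I (σ x) (τ y) ↔ I x y) : #{x | σ x = x} = #{y | τ y = y} := by
  have hcount : ∑ x, #{y | I (σ x) y ∧ I x y} = ∑ y, #{x | I x (τ y) ∧ I x y} := calc
    ∑ x, #{y | I (σ x) y ∧ I x y} = ∑ y, #{x | I (σ x) y ∧ I x y} :=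
      sum_card_bipartiteAbove_eq_sum_card_bipartiteBelow _
    _ = ∑ y, #{x | I x (τ y) ∧ I x y} := by
      refine sum_congr rfl fun y _ => card_equiv σ fun x => ?_
      simp [hστ, and_comm]
  have hcount' : (c * Fintype.card X + (r - c) * #{x | σ x = x} : ℤ) =
      c * Fintype.card Y + (r - c) * #{y | τ y = y} := by
    rw [← hI.sum_card_blocks, ← hI.dual.sum_card_blocks]
    exact_mod_cast hcount
  rw [hI.card_eq, add_right_inj] at hcount'
  have hrc' : (r - c : ℤ) ≠ 0 := sub_ne_zero.2 (mod_cast hrc)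
  exact_mod_cast mul_left_cancel₀ hrc' hcount'

end IsSymmetricDesign

variable {Z : Type*} [AddCommGroup Z] [DecidableEq Z]

/-- A difference set in an abelian group: every nonzero element is a difference of two elements of
`D` in exactly `c` ways. -/
def IsDifferenceSet (D : Finset Z) (c : ℕ) : Prop :=
  ∀ d ≠ 0, #{p ∈ D ×ˢ D | p.1 - p.2 = d} = c

lemma IsDifferenceSet.isSymmetricDesign [Fintype Z] {D : Finset Z} {c : ℕ}
    (hD : IsDifferenceSet D c) : IsSymmetricDesign (fun x y : Z => x + y ∈ D) #D c := by
  have hcard (x x' : Z) : #{y | x + y ∈ D ∧ x' + y ∈ D} = if x = x' then #D else c := by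
    split_ifs with hx
    · subst hx
      refine card_equiv (Equiv.addLeft x) fun y => ?_
      simp
    · rw [← hD (x - x') (sub_ne_zero.2 hx)]
      refine card_bij (fun y _ => (x + y, x' + y)) (by simp +contextual) (by simp) ?_
      rintro ⟨a, b⟩ hab
      obtain ⟨⟨ha, hb⟩, hsub⟩ : (a ∈ D ∧ b ∈ D) ∧ a - b = x - x' := by simpa using hab
      have hb' : x' + (a - x) = b := by rw [← sub_eq_zero, ← sub_eq_zero.2 hsub]; abel
      exact ⟨a - x, by simp [ha, hb, hb'], by simp [hb']⟩
  exact ⟨rfl, hcard, by simpa only [add_comm] using hcard⟩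

end SymmetricDesign

section PointsAndPlanes

open MulAction

/-- The points of PG(3,2), on which `G₀` acts by its first coordinate. A separate type, because
`G₀` acts on `Fin 15` in two ways. -/
def Point : Type := Fin 15
  deriving Zero, Finite

/-- The planes of PG(3,2), on which `G₀` acts by its second coordinate. -/
def Plane : Type := Fin 15
  deriving Zero, Finite

instance : MulAction G₀ Point :=
  .compHom (Fin 15) ((MonoidHom.fst (Perm (Fin 15)) (Perm (Fin 15))).comp G₀.subtype)

instance : MulAction G₀ Plane :=
  .compHom (Fin 15) ((MonoidHom.snd (Perm (Fin 15)) (Perm (Fin 15))).comp G₀.subtype)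

/-- The Singer difference set of PG(3,2): in the labelling of the example, the point `x` lies on
the plane `y` if and only if `x + y ∈ singerSet`. -/
def singerSet : Finset (Fin 15) := {0, 1, 2, 4, 5, 8, 10}

lemma isDifferenceSet_singerSet : IsDifferenceSet singerSet 3 := by
  unfold IsDifferenceSet
  decide

lemma j_mem : (j, j') ∈ G₀ := Subgroup.subset_closure (by simp)

lemma k_mem : (k, k') ∈ G₀ := Subgroup.subset_closure (by simp)

lemma l_mem : (l, l') ∈ G₀ := Subgroup.subset_closure (by simp)

lemma add_mem_singerSet_iff {p : Perm (Fin 15) × Perm (Fin 15)} (hp : p ∈ G₀) :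
    ∀ x y, p.1 x + p.2 y ∈ singerSet ↔ x + y ∈ singerSet := by
  induction hp using Subgroup.closure_induction with
  | mem p hp => rcases hp with rfl | rfl | rfl <;> decide +kernel
  | one => simp
  | mul p q _ _ hp hq => simp [hp, hq]
  | inv p _ hp => intro x y; simpa using (hp (p.1⁻¹ x) (p.2⁻¹ y)).symm

theorem card_fixed_eq_of_mem {p : Perm (Fin 15) × Perm (Fin 15)} (hp : p ∈ G₀) :
    Nat.card {x // p.1 x = x} = Nat.card {y // p.2 y = y} := by
  have hne : singerSet.card ≠ 3 := by decide
  simpa [Fintype.card_subtype] using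
    isDifferenceSet_singerSet.isSymmetricDesign.card_fixed_eq hne (add_mem_singerSet_iff hp)

lemma l_mul_k_mul_j : l * k * j = Equiv.addRight 1 := by decide

lemma l'_mul_k'_mul_j' : l' * k' * j' = Equiv.addRight (-1) := by decide

lemma addRight_mem (a : Fin 15) : (Equiv.addRight a, Equiv.addRight (-a)) ∈ G₀ := by
  have hpow : ∀ a : Fin 15, (Equiv.addRight a, Equiv.addRight (-a)) =
      (Equiv.addRight 1, Equiv.addRight (-1)) ^ (a : ℕ) := by decide +kernel
  rw [hpow, ← l_mul_k_mul_j, ← l'_mul_k'_mul_j']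
  exact pow_mem (mul_mem (mul_mem l_mem k_mem) j_mem) _

/-- The element of `G₀` that translates the points by `a` and the planes by `-a`. -/
def translation (a : Fin 15) : G₀ := ⟨(Equiv.addRight a, Equiv.addRight (-a)), addRight_mem a⟩

instance : IsPretransitive G₀ Point :=
  .of_orbit (x₀ := 0) fun x : Fin 15 => ⟨translation x, zero_add x⟩

instance : IsPretransitive G₀ Plane :=
  .of_orbit (x₀ := 0) fun y : Fin 15 => ⟨translation (-y), (zero_add _).trans (neg_neg y)⟩

lemma A_eq_stabilizer : A = stabilizer G₀ (0 : Point) := rfl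

lemma B_eq_stabilizer : B = stabilizer G₀ (0 : Plane) := rfl

lemma smul_translation_smul_of_A_eq_stabilizer {y : Plane} (hA : A = stabilizer G₀ y)
    {g : G₀} {x : Point} (hg : g • x = x) : g • translation x • y = translation x • y := by
  have hx : translation x • (0 : Point) = x := zero_add (M := Fin 15) x
  have hconj : (translation x)⁻¹ * g * translation x ∈ A := by
    rw [A_eq_stabilizer, mem_stabilizer_iff, mul_smul, mul_smul, hx, inv_smul_eq_iff, hx, hg]
  rwa [hA, mem_stabilizer_iff, mul_smul, mul_smul, inv_smul_eq_iff] at hconj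

lemma A_ne_stabilizer_plane (y : Plane) : A ≠ stabilizer G₀ y := by
  intro hA
  have fixes {g : G₀} {x : Point} (hg : g • x = x) : g • translation x • y = translation x • y :=
    smul_translation_smul_of_A_eq_stabilizer hA hg
  have hj : j' (translation 3 • y) = translation 3 • y :=
    fixes (g := ⟨_, j_mem⟩) (x := (3 : Fin 15)) (by decide : j 3 = 3)
  have hk : k' (translation 3 • y) = translation 3 • y :=
    fixes (g := ⟨_, k_mem⟩) (x := (3 : Fin 15)) (by decide : k 3 = 3)
  have hl : l' (translation 5 • y) = translation 5 • y :=
    fixes (g := ⟨_, l_mem⟩) (x := (5 : Fin 15)) (by decide : l 5 = 5)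
  have not_fixed : ∀ y : Fin 15,
      j' (y + -3) = y + -3 → k' (y + -3) = y + -3 → l' (y + -5) ≠ y + -5 := by decide
  exact not_fixed y hj hk hl

end PointsAndPlanes

end Gassmann

open Gassmann in
/-- Every element of `G₀` has equally many fixed points in its two coordinates; the point
stabilizers `A` and `B` are Gassmann equivalent of index 15, but not conjugate. -/
theorem fixed_gassmann_not_conjugate :
    (∀ p ∈ G₀, Nat.card {x : Fin 15 // p.1 x = x} = Nat.card {x : Fin 15 // p.2 x = x}) ∧
    (∀ g : G₀,
      Nat.card ((A : Set G₀) ∩ {x : G₀ | IsConj g x} : Set G₀) =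
      Nat.card ((B : Set G₀) ∩ {x : G₀ | IsConj g x} : Set G₀)) ∧
    A.index = 15 ∧ B.index = 15 ∧
    ¬ ∃ x : G₀, Subgroup.map (MulAut.conj x).toMonoidHom A = B := by
  refine ⟨fun _ hp => card_fixed_eq_of_mem hp, ?_, ?_, ?_, ?_⟩
  · exact isGassmannEquivalent_stabilizer (fun g => card_fixed_eq_of_mem g.2) (0 : Point)
      (0 : Plane)
  · rw [A_eq_stabilizer, MulAction.index_stabilizer_of_transitive]
    exact Nat.card_fin 15
  · rw [B_eq_stabilizer, MulAction.index_stabilizer_of_transitive]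
    exact Nat.card_fin 15
  · rintro ⟨u, hu⟩
    rw [B_eq_stabilizer] at hu
    obtain ⟨y, hy⟩ := exists_eq_stabilizer_of_map_conj_eq hu
    exact A_ne_stabilizer_plane y hy
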